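/- Let Ω ⊂ ℝⁿ be a bounded smooth convex domain and u a Dirichlet eigenfunction: Δu + λu = 0 in Ω, u = 0 on ∂Ω, normalized with ∫_Ω u² = 1. Then ∫_Ω |D²u|² ≤ λ². -/

import Mathlib

open MeasureTheory Metric Set Filter
open scoped RealInnerProductSpace

/-- The Laplacian of `u : ℝⁿ → ℝ` at `x`. -/
noncomputable def lap {n : ℕ} (u : EuclideanSpace ℝ (Fin n) → ℝ)
    (x : EuclideanSpace ℝ (Fin n)) : ℝ :=
  ∑ i : Fin n, fderiv ℝ (fun y => fderiv ℝ u y (EuclideanSpace.single i 1)) x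
    (EuclideanSpace.single i 1)

/-- The squared Hilbert–Schmidt norm `|D²u|² = Σ_{i,j} (∂²_{ij} u)²` of the Hessian. -/
noncomputable def hessSq {n : ℕ} (u : EuclideanSpace ℝ (Fin n) → ℝ)
    (x : EuclideanSpace ℝ (Fin n)) : ℝ :=
  ∑ i : Fin n, ∑ j : Fin n,
    (fderiv ℝ (fun y => fderiv ℝ u y (EuclideanSpace.single i 1)) x
      (EuclideanSpace.single j 1)) ^ 2

/-- The tangential (boundary) gradient of `u` relative to the unit normal field `ν`. -/
noncomputable def tgrad {n : ℕ} (u : EuclideanSpace ℝ (Fin n) → ℝ)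
    (ν : EuclideanSpace ℝ (Fin n) → EuclideanSpace ℝ (Fin n))
    (x : EuclideanSpace ℝ (Fin n)) : EuclideanSpace ℝ (Fin n) :=
  gradient u x - ⟪gradient u x, ν x⟫ • ν x

/-- `Ω` has `C^∞` boundary: it is the sublevel set of a smooth defining function which
is regular on the boundary. -/
def HasSmoothBoundary {n : ℕ} (Ω : Set (EuclideanSpace ℝ (Fin n))) : Prop :=
  ∃ f : EuclideanSpace ℝ (Fin n) → ℝ, ContDiff ℝ (⊤ : ℕ∞) f ∧ Ω = {x | f x < 0} ∧
    ∀ x ∈ frontier Ω, fderiv ℝ f x ≠ 0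

section

open scoped Topology ContDiff Manifold

lemma contDiff_mul_of_tsupport_subset
    {E : Type*} [NormedAddCommGroup E] [NormedSpace ℝ E] {U : Set E} (hU : IsOpen U)
    {a b : E → ℝ} {k : ℕ∞}
    (ha : ContDiffOn ℝ k a U) (hb : ContDiff ℝ k b) (hbU : tsupport b ⊆ U) :
    ContDiff ℝ k fun x => b x * a x := by
  rw [contDiff_iff_contDiffAt]
  intro x
  by_cases hx : x ∈ tsupport b
  · exact hb.contDiffAt.mul (ha.contDiffAt (hU.mem_nhds (hbU hx)))
  · refine (contDiffAt_const (c := (0 : ℝ))).congr_of_eventuallyEq ?_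
    filter_upwards [notMem_tsupport_iff_eventuallyEq.1 hx] with y hy
    simp [hy]

lemma continuous_mul_of_tsupport_subset {E : Type*} [TopologicalSpace E] {U : Set E}
    (hU : IsOpen U) {a b : E → ℝ}
    (ha : ContinuousOn a U) (hb : Continuous b) (hbU : tsupport b ⊆ U) :
    Continuous fun x => b x * a x := by
  rw [continuous_iff_continuousAt]
  intro x
  by_cases hx : x ∈ tsupport b
  · exact hb.continuousAt.mul (ha.continuousAt (hU.mem_nhds (hbU hx)))
  · refine (continuousAt_const (y := (0 : ℝ))).congr ?_
    filter_upwards [notMem_tsupport_iff_eventuallyEq.1 hx] with y hy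
    simp [hy]

section IntegrationByParts

variable {E : Type*} [NormedAddCommGroup E] [NormedSpace ℝ E]
  [MeasurableSpace E] [BorelSpace E] {μ : Measure E} [μ.IsAddHaarMeasure]

/-- The pairing of a compactly supported continuous function with the translates of a compactly
supported `C^1` function may be differentiated under the integral sign. -/
lemma hasDerivAt_integral_mul_comp_add_smul {p q : E → ℝ} (hp : Continuous p)
    (hpc : HasCompactSupport p) (hq : ContDiff ℝ 1 q) (hqc : HasCompactSupport q) (w : E) :
    HasDerivAt (fun t : ℝ => ∫ x, p x * q (x + t • w) ∂μ) (∫ x, p x * fderiv ℝ q x w ∂μ) 0 := by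
  have hdq : Continuous (fun x => fderiv ℝ q x w) :=
    (hq.continuous_fderiv one_ne_zero).clm_apply continuous_const
  obtain ⟨C, hC⟩ := (hqc.fderiv_apply (𝕜 := ℝ) w).exists_bound_of_continuous hdq
  have hmeas : ∀ t : ℝ, Continuous fun x => p x * q (x + t • w) := fun t =>
    hp.mul (hq.continuous.comp (by fun_prop))
  have key := (hasDerivAt_integral_of_dominated_loc_of_deriv_le (μ := μ) (x₀ := (0 : ℝ))
    (s := univ) (F := fun t x => p x * q (x + t • w))
    (F' := fun t x => p x * fderiv ℝ q (x + t • w) w) (bound := fun x => ‖p x‖ * C)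
    univ_mem ?_ ?_ ?_ ?_ ?_ ?_).2
  · simpa using key
  · exact Eventually.of_forall fun t => (hmeas t).aestronglyMeasurable
  · exact (hmeas 0).integrable_of_hasCompactSupport hpc.mul_right
  · exact (hp.mul
      (hdq.comp (by fun_prop : Continuous fun x : E => x + (0 : ℝ) • w))).aestronglyMeasurable
  · refine Eventually.of_forall fun x t _ => ?_
    rw [norm_mul]
    exact mul_le_mul_of_nonneg_left (hC _) (norm_nonneg _)
  · exact (hp.norm.mul continuous_const).integrable_of_hasCompactSupport hpc.norm.mul_right
  · refine Eventually.of_forall fun x t _ => ?_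
    have h1 : HasDerivAt (fun t : ℝ => x + t • w) w t := by
      simpa using ((hasDerivAt_id t).smul_const w).const_add x
    have h2 := ((hq.differentiable one_ne_zero) (x + t • w)).hasFDerivAt.comp_hasDerivAt t h1
    exact h2.const_mul (p x)

variable [FiniteDimensional ℝ E]

/-- The `2 × 2` Jacobian minors integrate to zero, for compactly supported functions of
class `C^1`. -/
lemma integral_fderiv_mul_fderiv_comm {a b : E → ℝ} (ha : ContDiff ℝ 1 a)
    (hac : HasCompactSupport a) (hb : ContDiff ℝ 1 b) (hbc : HasCompactSupport b) (v w : E) :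
    ∫ x, fderiv ℝ a x v * fderiv ℝ b x w ∂μ = ∫ x, fderiv ℝ a x w * fderiv ℝ b x v ∂μ := by
  have hda : ∀ v, Continuous (fun x => fderiv ℝ a x v) := fun v =>
    (ha.continuous_fderiv one_ne_zero).clm_apply continuous_const
  have hdb : ∀ v, Continuous (fun x => fderiv ℝ b x v) := fun v =>
    (hb.continuous_fderiv one_ne_zero).clm_apply continuous_const
  have h1 := hasDerivAt_integral_mul_comp_add_smul (μ := μ) (hda v) (hac.fderiv_apply (𝕜 := ℝ) v)
    hb hbc w
  have h2 := (hasDerivAt_integral_mul_comp_add_smul (μ := μ) (hdb v)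
    (hbc.fderiv_apply (𝕜 := ℝ) v) ha hac (-w)).neg
  have heq : (fun t : ℝ => ∫ x, fderiv ℝ a x v * b (x + t • w) ∂μ)
      = - (fun t : ℝ => ∫ x, fderiv ℝ b x v * a (x + t • (-w)) ∂μ) := by
    funext t
    have hb' : ContDiff ℝ 1 (fun x => b (x + t • w)) := hb.comp (by fun_prop)
    have hfd : ∀ x, fderiv ℝ (fun x => b (x + t • w)) x = fderiv ℝ b (x + t • w) := fun x =>
      fderiv_comp_add_right _
    have hcont : Continuous (fun x => fderiv ℝ (fun x => b (x + t • w)) x v) :=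
      (hb'.continuous_fderiv one_ne_zero).clm_apply continuous_const
    have hip := integral_mul_fderiv_eq_neg_fderiv_mul_of_integrable (μ := μ) (f := a)
      (g := fun x => b (x + t • w)) (v := v)
      (((hda v).mul hb'.continuous).integrable_of_hasCompactSupport
        (hac.fderiv_apply (𝕜 := ℝ) v).mul_right)
      ((ha.continuous.mul hcont).integrable_of_hasCompactSupport hac.mul_right)
      ((ha.continuous.mul hb'.continuous).integrable_of_hasCompactSupport hac.mul_right)
      (fun x _ => ha.differentiable one_ne_zero x) (fun x _ => hb'.differentiable one_ne_zero x)
    have htr := integral_add_right_eq_self (μ := μ)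
      (fun x => fderiv ℝ b x v * a (x + t • (-w))) (t • w)
    simp only [Pi.neg_apply]
    rw [← htr, eq_neg_iff_add_eq_zero, ← sub_eq_zero_of_eq hip]
    simp only [hfd, smul_neg, add_neg_cancel_right, sub_neg_eq_add]
    rw [add_comm]
    congr 2
    funext x
    ring
  rw [heq] at h1
  rw [h1.unique h2, ← integral_neg]
  congr 1
  funext x
  simp only [map_neg]
  ring

/-- A version of `integral_fderiv_mul_fderiv_comm` in which one of the functions is only defined
on an open neighbourhood of the support of the other one. -/
lemma integral_fderiv_mul_fderiv_comm_of_tsupport_subset {U : Set E} (hU : IsOpen U) {a b : E → ℝ}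
    (ha : ContDiffOn ℝ 1 a U) (hb : ContDiff ℝ 1 b) (hbc : HasCompactSupport b)
    (hbU : tsupport b ⊆ U) (v w : E) :
    ∫ x, fderiv ℝ a x v * fderiv ℝ b x w ∂μ = ∫ x, fderiv ℝ a x w * fderiv ℝ b x v ∂μ := by
  obtain ⟨L, hL, hbL, hLU⟩ := exists_compact_between hbc.isCompact hU hbU
  obtain ⟨θ, hθ1, hθ0, -⟩ := exists_contMDiffMap_one_nhds_of_subset_interior (n := 1) 𝓘(ℝ, E)
    (isClosed_tsupport b) hbL
  have hθ : ContDiff ℝ 1 θ := θ.contMDiff.contDiff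
  have hθL : tsupport θ ⊆ L := closure_minimal (fun x hx => by
    by_contra h
    exact hx (hθ0 x h)) hL.isClosed
  have hθc : HasCompactSupport θ := hL.of_isClosed_subset (isClosed_tsupport _) hθL
  have key := integral_fderiv_mul_fderiv_comm (μ := μ)
    (contDiff_mul_of_tsupport_subset (k := 1) hU ha hθ (hθL.trans hLU)) hθc.mul_right hb hbc v w
  have heq : ∀ v w x, fderiv ℝ (fun x => θ x * a x) x v * fderiv ℝ b x w
      = fderiv ℝ a x v * fderiv ℝ b x w := by
    intro v w x
    by_cases hx : x ∈ tsupport b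
    · congr 2
      refine Filter.EventuallyEq.fderiv_eq ?_
      filter_upwards [Filter.Eventually.filter_mono (nhds_le_nhdsSet hx) hθ1] with y hy
      simp [hy]
    · have : fderiv ℝ b x = 0 := by
        by_contra h
        exact hx (support_fderiv_subset ℝ h)
      simp [this]
  simpa only [heq] using key

end IntegrationByParts

section Divergence

variable {E : Type*} [NormedAddCommGroup E] [NormedSpace ℝ E] [FiniteDimensional ℝ E]
  [MeasurableSpace E] [BorelSpace E] {μ : Measure E} [μ.IsAddHaarMeasure]

/-- The integral of the antisymmetrised divergence
`∂_w (φ g ∂_v a) - ∂_v (φ g ∂_w a)` vanishes, for functions `a`, `g` of class `C^1` on an open set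
and a cutoff function `φ` supported in it. -/
lemma integral_cutoff_mul_minor {U : Set E} (hU : IsOpen U) {a g φ : E → ℝ}
    (ha : ContDiffOn ℝ 1 a U) (hg : ContDiffOn ℝ 1 g U) (hφ : ContDiff ℝ 1 φ)
    (hφc : HasCompactSupport φ) (hφU : tsupport φ ⊆ U) (v w : E) :
    Integrable (fun x => φ x * (fderiv ℝ a x v * fderiv ℝ g x w - fderiv ℝ a x w * fderiv ℝ g x v)
      + g x * (fderiv ℝ φ x w * fderiv ℝ a x v - fderiv ℝ φ x v * fderiv ℝ a x w)) μ ∧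
    ∫ x, (φ x * (fderiv ℝ a x v * fderiv ℝ g x w - fderiv ℝ a x w * fderiv ℝ g x v)
      + g x * (fderiv ℝ φ x w * fderiv ℝ a x v - fderiv ℝ φ x v * fderiv ℝ a x w)) ∂μ = 0 := by
  have hb : ContDiff ℝ 1 (fun x => φ x * g x) :=
    contDiff_mul_of_tsupport_subset (k := 1) hU hg hφ hφU
  have hbc : HasCompactSupport (fun x => φ x * g x) := hφc.mul_right
  have hbU : tsupport (fun x => φ x * g x) ⊆ U := (tsupport_mul_subset_left).trans hφU
  have hda : ∀ v, ContinuousOn (fun x => fderiv ℝ a x v) U := fun v =>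
    (ha.continuousOn_fderiv_of_isOpen hU le_rfl).clm_apply continuousOn_const
  have hdb : ∀ v, Continuous (fun x => fderiv ℝ (fun x => φ x * g x) x v) := fun v =>
    (hb.continuous_fderiv one_ne_zero).clm_apply continuous_const
  have hint : ∀ v w,
      Integrable (fun x => fderiv ℝ a x v * fderiv ℝ (fun x => φ x * g x) x w) μ := by
    intro v w
    simp only [mul_comm (fderiv ℝ a _ v)]
    exact (continuous_mul_of_tsupport_subset hU (hda v) (hdb w)
      ((tsupport_fderiv_apply_subset ℝ w).trans hbU)).integrable_of_hasCompactSupport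
      (hbc.fderiv_apply (𝕜 := ℝ) w).mul_right
  have heq : ∀ x, φ x * (fderiv ℝ a x v * fderiv ℝ g x w - fderiv ℝ a x w * fderiv ℝ g x v)
      + g x * (fderiv ℝ φ x w * fderiv ℝ a x v - fderiv ℝ φ x v * fderiv ℝ a x w)
      = fderiv ℝ a x v * fderiv ℝ (fun x => φ x * g x) x w
        - fderiv ℝ a x w * fderiv ℝ (fun x => φ x * g x) x v := by
    intro x
    by_cases hx : x ∈ tsupport φ
    · rw [fderiv_fun_mul (hφ.differentiable one_ne_zero x)
        ((hg.contDiffAt (hU.mem_nhds (hφU hx))).differentiableAt one_ne_zero)]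
      simp only [add_apply, smul_apply, smul_eq_mul]
      ring
    · have h1 : φ x = 0 := image_eq_zero_of_notMem_tsupport hx
      have h2 : fderiv ℝ φ x = 0 := by
        by_contra h
        exact hx (support_fderiv_subset ℝ h)
      have h3 : fderiv ℝ (fun x => φ x * g x) x = 0 := by
        by_contra h
        exact hx (tsupport_mul_subset_left (support_fderiv_subset ℝ h))
      simp [h1, h2, h3]
  simp only [heq]
  refine ⟨(hint v w).sub (hint w v), ?_⟩
  rw [integral_sub (hint v w) (hint w v), integral_fderiv_mul_fderiv_comm_of_tsupport_subset hU ha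
    hb hbc hbU v w, sub_self]

lemma integral_fderiv_apply_eq_zero {b : E → ℝ} (hb : ContDiff ℝ 1 b) (hbc : HasCompactSupport b)
    (v : E) : Integrable (fun x => fderiv ℝ b x v) μ ∧ ∫ x, fderiv ℝ b x v ∂μ = 0 := by
  have hint : Integrable (fun x => fderiv ℝ b x v) μ :=
    ((hb.continuous_fderiv one_ne_zero).clm_apply
      continuous_const).integrable_of_hasCompactSupport (hbc.fderiv_apply (𝕜 := ℝ) v)
  refine ⟨hint, ?_⟩
  have := integral_mul_fderiv_eq_neg_fderiv_mul_of_integrable (μ := μ) (f := fun _ => (1 : ℝ))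
      (g := b) (v := v) (by simp) (by simpa using hint)
      (by simpa using hb.continuous.integrable_of_hasCompactSupport hbc)
      (fun x _ => differentiableAt_const _) (fun x _ => hb.differentiable one_ne_zero x)
  simpa using this

end Divergence

/-- The divergence theorem for the radial field `φ(x) (x - z)`. -/
lemma integral_cutoff_radial {n : ℕ} {φ : EuclideanSpace ℝ (Fin n) → ℝ} (hφ : ContDiff ℝ 1 φ)
    (hφc : HasCompactSupport φ) (z : EuclideanSpace ℝ (Fin n)) :
    Integrable (fun x => φ x * n + fderiv ℝ φ x (x - z)) ∧
      ∫ x, (φ x * n + fderiv ℝ φ x (x - z)) = 0 := by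
  have h : ∀ i : Fin n, _ := fun i => integral_fderiv_apply_eq_zero
    (μ := (volume : Measure (EuclideanSpace ℝ (Fin n)))) (b := fun x => φ x * (x i - z i))
    (hφ.mul (by fun_prop)) hφc.mul_right (EuclideanSpace.single i 1)
  have heq : ∀ x, φ x * n + fderiv ℝ φ x (x - z) = ∑ i : Fin n,
      fderiv ℝ (fun x => φ x * (x i - z i)) x (EuclideanSpace.single i 1) := by
    intro x
    have hx : x - z = ∑ i : Fin n, (x i - z i) • EuclideanSpace.single i (1 : ℝ) := by
      ext j
      simp [Finset.sum_apply, Pi.single_apply]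
    have hi : ∀ i : Fin n, fderiv ℝ (fun x => φ x * (x i - z i)) x (EuclideanSpace.single i 1)
        = φ x + (x i - z i) * fderiv ℝ φ x (EuclideanSpace.single i 1) := by
      intro i
      have h1 : HasFDerivAt (fun x : EuclideanSpace ℝ (Fin n) => x i - z i)
          (EuclideanSpace.proj i : EuclideanSpace ℝ (Fin n) →L[ℝ] ℝ) x :=
        (EuclideanSpace.proj i : EuclideanSpace ℝ (Fin n) →L[ℝ] ℝ).hasFDerivAt.sub_const _
      rw [fderiv_fun_mul (hφ.differentiable one_ne_zero x) h1.differentiableAt, h1.fderiv]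
      simp
    simp only [hi, Finset.sum_add_distrib]
    conv_lhs => rw [hx]
    simp [mul_comm]
  simp only [heq]
  refine ⟨integrable_finsetSum _ fun i _ => (h i).1, ?_⟩
  rw [integral_finsetSum _ fun i _ => (h i).1]
  exact Finset.sum_eq_zero fun i _ => (h i).2

lemma eq_zero_of_mem_frontier_sublevel {E : Type*} [TopologicalSpace E] {Ω : Set E}
    {f : E → ℝ} {x₀ : E}
    (hΩ : Ω = {x | f x < 0}) (hf : Continuous f)
    (hx₀ : x₀ ∈ frontier Ω) : f x₀ = 0 := by
  subst hΩ
  exact frontier_lt_subset_eq hf continuous_const hx₀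

section Boundary

variable {E : Type*} [NormedAddCommGroup E] [NormedSpace ℝ E]

/-- Second order Taylor expansion within a convex set. -/
lemma isLittleO_taylor_two_within {K : Set E} (hK : Convex ℝ K) {u : E → ℝ} {P : E → E →L[ℝ] ℝ}
    {Q : E →L[ℝ] E →L[ℝ] ℝ} {x₀ : E} (hx₀ : x₀ ∈ K)
    (hP : ∀ x ∈ K, HasFDerivWithinAt u (P x) K x) (hQ : HasFDerivWithinAt P Q K x₀)
    (hsymm : ∀ v w, Q v w = Q w v) :
    (fun y => u y - u x₀ - P x₀ (y - x₀) - Q (y - x₀) (y - x₀) / 2)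
      =o[𝓝[K] x₀] fun y => ‖y - x₀‖ ^ 2 := by
  rw [Asymptotics.isLittleO_iff]
  intro ε hε
  have h1 := hQ.isLittleO.def hε
  rw [eventually_nhdsWithin_iff, Metric.eventually_nhds_iff_ball] at h1
  obtain ⟨δ, hδ, h1⟩ := h1
  rw [eventually_nhdsWithin_iff, Metric.eventually_nhds_iff_ball]
  refine ⟨δ, hδ, fun y hy hyK => ?_⟩
  set G : E → ℝ := fun y => u y - P x₀ (y - x₀) - Q (y - x₀) (y - x₀) / 2 with hG
  have hGd : ∀ x ∈ K ∩ closedBall x₀ ‖y - x₀‖,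
      HasFDerivWithinAt G (P x - P x₀ - Q (x - x₀)) (K ∩ closedBall x₀ ‖y - x₀‖) x := by
    rintro x ⟨hx, -⟩
    have hid : HasFDerivAt (fun x : E => x - x₀) (ContinuousLinearMap.id ℝ E) x :=
      (hasFDerivAt_id x).sub_const x₀
    have e1 := (P x₀).hasFDerivAt.comp x hid
    have e2 := (Q.hasFDerivAt.comp x hid).clm_apply hid
    have e3 := (((hP x hx).mono inter_subset_left).sub e1.hasFDerivWithinAt).sub
      (e2.mul_const (1 / 2 : ℝ)).hasFDerivWithinAt (s := K ∩ closedBall x₀ ‖y - x₀‖)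
    refine (e3.congr_fderiv ?_).congr (fun z _ => ?_) ?_
    · ext v
      simp [hsymm v]
      ring
    all_goals
      simp [hG]
      ring
  have hbd : ∀ x ∈ K ∩ closedBall x₀ ‖y - x₀‖, ‖P x - P x₀ - Q (x - x₀)‖ ≤ ε * ‖y - x₀‖ := by
    rintro x ⟨hx, hxb⟩
    rw [mem_closedBall, dist_eq_norm] at hxb
    rw [mem_ball, dist_eq_norm] at hy
    refine (h1 x (by rw [mem_ball, dist_eq_norm]; exact hxb.trans_lt hy) hx).trans ?_
    gcongr
  have := (hK.inter (convex_closedBall x₀ ‖y - x₀‖)).norm_image_sub_le_of_norm_hasFDerivWithin_le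
    hGd hbd (x := x₀) (y := y) ⟨hx₀, by simp⟩ ⟨hyK, by simp [dist_eq_norm]⟩
  have h2 : G y - G x₀ = u y - u x₀ - P x₀ (y - x₀) - Q (y - x₀) (y - x₀) / 2 := by
    simp [hG]
    ring
  rw [h2] at this
  refine this.trans (le_of_eq ?_)
  rw [norm_pow, norm_norm]
  ring

/-- A segment joining a point of an open set to a point outside of it meets the frontier. -/
lemma exists_mem_segment_inter_frontier {Ω : Set E} (hΩ : IsOpen Ω) {a b : E} (ha : a ∈ Ω)
    (hb : b ∉ Ω) : ∃ c ∈ segment ℝ b a, c ∈ frontier Ω := by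
  by_contra! h
  have hpre : IsPreconnected (segment ℝ b a) := (convex_segment b a).isPreconnected
  have hsub : segment ℝ b a ⊆ Ω := by
    refine hpre.subset_left_of_subset_union hΩ (isClosed_closure (s := Ω)).isOpen_compl ?_ ?_
      ⟨a, right_mem_segment ℝ b a, ha⟩
    · exact disjoint_compl_right_iff_subset.2 subset_closure
    · intro c hc
      by_cases hc' : c ∈ Ω
      · exact Or.inl hc'
      · refine Or.inr fun hcc => h c hc ?_
        rw [hΩ.frontier_eq]
        exact ⟨hcc, hc'⟩
  exact hb (hsub (left_mem_segment ℝ b a))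

variable {Ω : Set E} {f : E → ℝ} {f' : E →L[ℝ] ℝ} {x₀ : E}

/-- The differential of a defining function is a strict supporting functional at boundary
points. -/
lemma fderiv_sub_neg_of_mem (hΩ : Ω = {x | f x < 0}) (hf : Continuous f) (hconv : Convex ℝ Ω)
    (hx₀ : x₀ ∈ frontier Ω) (hf' : HasFDerivAt f f' x₀) (hne : f' ≠ 0) {y : E} (hy : y ∈ Ω) :
    f' (y - x₀) < 0 := by
  have hopen : IsOpen Ω := by
    rw [hΩ]
    exact isOpen_lt hf continuous_const
  have hle : ∀ y ∈ Ω, f' (y - x₀) ≤ 0 := by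
    intro y hy
    have hmax : IsLocalMaxOn f (closure Ω) x₀ := by
      refine eventually_nhdsWithin_of_forall fun x hx => ?_
      rw [eq_zero_of_mem_frontier_sublevel hΩ hf hx₀]
      rw [hΩ] at hx
      exact closure_lt_subset_le hf continuous_const hx
    refine hmax.hasFDerivWithinAt_nonpos hf'.hasFDerivWithinAt ?_
    exact sub_mem_posTangentConeAt_of_segment_subset
      (hconv.closure.segment_subset (frontier_subset_closure hx₀) (subset_closure hy))
  refine (hle y hy).lt_of_ne fun h0 => hne ?_
  have hloc : IsLocalMax (fun y => f' (y - x₀)) y := by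
    filter_upwards [hopen.mem_nhds hy] with z hz
    rw [h0]
    exact hle z hz
  have hd : HasFDerivAt (fun y => f' (y - x₀)) f' y := by
    exact f'.hasFDerivAt.comp y ((hasFDerivAt_id y).sub_const x₀)
  exact hloc.hasFDerivAt_eq_zero hd

/-- Boundary points approaching `x₀` in a tangential direction `τ` from the inner side. -/
lemma exists_seq_mem_frontier (hΩ : Ω = {x | f x < 0}) (hf : Continuous f) (hconv : Convex ℝ Ω)
    (hx₀ : x₀ ∈ frontier Ω) (hf' : HasFDerivAt f f' x₀) {τ ν : E} (hτ : f' τ = 0)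
    (hν : 0 < f' ν) :
    ∃ t r : ℕ → ℝ, (∀ k, 0 < t k) ∧ Tendsto t atTop (𝓝 0) ∧ (∀ k, 0 ≤ r k) ∧
      Tendsto r atTop (𝓝 0) ∧ ∀ k, x₀ + t k • (τ - r k • ν) ∈ frontier Ω := by
  have hopen : IsOpen Ω := by
    rw [hΩ]
    exact isOpen_lt hf continuous_const
  have hne : f' ≠ 0 := by
    rintro rfl
    simp at hν
  have hstep : ∀ k : ℕ, ∃ t r : ℝ, 0 < t ∧ t ≤ 1 / ((k : ℝ) + 1) ∧ 0 ≤ r ∧ r ≤ 1 / ((k : ℝ) + 1) ∧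
      x₀ + t • (τ - r • ν) ∈ frontier Ω := by
    intro k
    have hη : (0 : ℝ) < 1 / ((k : ℝ) + 1) := by positivity
    set η : ℝ := 1 / ((k : ℝ) + 1)
    have hneg : f' (τ - η • ν) < 0 := by
      simp only [map_sub, map_smul, hτ, smul_eq_mul, zero_sub]
      nlinarith [mul_pos hη hν]
    have hline : HasDerivAt (fun t : ℝ => f (x₀ + t • (τ - η • ν))) (f' (τ - η • ν)) 0 := by
      have h1 : HasDerivAt (fun t : ℝ => x₀ + t • (τ - η • ν)) (τ - η • ν) 0 := by
        simpa using ((hasDerivAt_id (0 : ℝ)).smul_const (τ - η • ν)).const_add x₀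
      have h2 : HasFDerivAt f f' (x₀ + (0 : ℝ) • (τ - η • ν)) := by simpa using hf'
      exact h2.comp_hasDerivAt 0 h1
    have hev := hline.tendsto_slope_zero_right.eventually (gt_mem_nhds hneg)
    obtain ⟨t, ht, ht0, htη⟩ := (hev.and (Ioc_mem_nhdsGT hη)).exists
    have hin : x₀ + t • (τ - η • ν) ∈ Ω := by
      rw [hΩ, mem_ofPred_eq]
      simp only [zero_add, zero_smul, add_zero, eq_zero_of_mem_frontier_sublevel hΩ hf hx₀,
        sub_zero, smul_eq_mul] at ht
      by_contra! h
      exact absurd ht (not_lt.2 (by positivity))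
    have hout : x₀ + t • τ ∉ Ω := by
      intro h
      have := fderiv_sub_neg_of_mem hΩ hf hconv hx₀ hf' hne h
      simp [hτ] at this
    obtain ⟨c, hc, hcf⟩ := exists_mem_segment_inter_frontier hopen hin hout
    rw [segment_eq_image] at hc
    obtain ⟨s, ⟨hs0, hs1⟩, rfl⟩ := hc
    refine ⟨t, s * η, ht0, htη, by positivity, by nlinarith, ?_⟩
    convert hcf using 1
    module
  choose t r ht0 ht hr0 hr hmem using hstep
  have hlim := tendsto_one_div_add_atTop_nhds_zero_nat (𝕜 := ℝ)
  exact ⟨t, r, ht0, squeeze_zero (fun k => (ht0 k).le) ht hlim, hr0, squeeze_zero hr0 hr hlim, hmem⟩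

/-- If `u` vanishes on the boundary of a convex domain, then so do its tangential derivatives, and
the tangential part of its Hessian has the sign of its outer normal derivative. -/
lemma tangential_derivatives_of_frontier (hΩ : Ω = {x | f x < 0}) (hf : Continuous f)
    (hconv : Convex ℝ Ω) (hx₀ : x₀ ∈ frontier Ω) (hf' : HasFDerivAt f f' x₀) {u : E → ℝ}
    (hu : ∀ x ∈ frontier Ω, u x = 0) {P : E → E →L[ℝ] ℝ} {Q : E →L[ℝ] E →L[ℝ] ℝ}
    (hP : ∀ x ∈ closure Ω, HasFDerivWithinAt u (P x) (closure Ω) x)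
    (hQ : HasFDerivWithinAt P Q (closure Ω) x₀) (hsymm : ∀ v w, Q v w = Q w v)
    {τ ν : E} (hτ : f' τ = 0) (hν : 0 < f' ν) :
    P x₀ τ = 0 ∧ 0 ≤ P x₀ ν * Q τ τ := by
  obtain ⟨t, r, ht0, ht, hr0, hr, hmem⟩ := exists_seq_mem_frontier hΩ hf hconv hx₀ hf' hτ hν
  have hx₀c : x₀ ∈ closure Ω := frontier_subset_closure hx₀
  have hv : Tendsto (fun k => τ - r k • ν) atTop (𝓝 τ) := by
    simpa using tendsto_const_nhds.sub (hr.smul_const ν)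
  have hd : Tendsto (fun k => t k • (τ - r k • ν)) atTop (𝓝 0) := by
    simpa using ht.smul hv
  have hmemc : ∀ k, x₀ + t k • (τ - r k • ν) ∈ closure Ω := fun k =>
    frontier_subset_closure (hmem k)
  have hPτ : P x₀ τ = 0 := by
    have h := (hP x₀ hx₀c).lim (c := fun k => (t k)⁻¹) (v := τ) hd (Eventually.of_forall hmemc)
      (by simpa only [inv_smul_smul₀ (ht0 _).ne'] using hv)
    simp only [hu _ (hmem _), hu _ hx₀, sub_zero, smul_zero] at h
    exact tendsto_nhds_unique h tendsto_const_nhds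
  refine ⟨hPτ, ?_⟩
  have htay := isLittleO_taylor_two_within hconv.closure hx₀c hP hQ hsymm
  have hlim : Tendsto (fun k => x₀ + t k • (τ - r k • ν)) atTop (𝓝[closure Ω] x₀) := by
    rw [tendsto_nhdsWithin_iff]
    exact ⟨by simpa using hd.const_add x₀, Eventually.of_forall hmemc⟩
  have h1 := htay.comp_tendsto hlim
  have h2 : (fun k => r k * P x₀ ν / t k - Q (τ - r k • ν) (τ - r k • ν) / 2)
      =o[atTop] fun k => ‖τ - r k • ν‖ ^ 2 := by
    have h3 := h1.mul_isBigO (Asymptotics.isBigO_refl (fun k => (t k)⁻¹ ^ 2) atTop)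
    refine h3.congr (fun k => ?_) (fun k => ?_)
    · have := (ht0 k).ne'
      simp only [Function.comp, add_sub_cancel_left, hu _ (hmem _), hu _ hx₀, map_smul, map_sub,
        hPτ,
        smul_apply, smul_eq_mul]
      field_simp
      ring
    · have := (ht0 k).ne'
      simp only [Function.comp, add_sub_cancel_left, norm_smul, mul_pow, Real.norm_eq_abs, sq_abs]
      field_simp
  have h4 : Tendsto (fun k => r k * P x₀ ν / t k - Q (τ - r k • ν) (τ - r k • ν) / 2)
      atTop (𝓝 0) :=
    (Asymptotics.isLittleO_one_iff ℝ).1 (h2.trans_isBigO ((hv.norm.pow 2).isBigO_one ℝ))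
  have h5 : Tendsto (fun k => Q (τ - r k • ν) (τ - r k • ν) / 2) atTop (𝓝 (Q τ τ / 2)) :=
    (((show Continuous fun v => Q v v by fun_prop).tendsto τ).comp hv).div_const 2
  have h6 : Tendsto (fun k => r k * P x₀ ν / t k) atTop (𝓝 (Q τ τ / 2)) := by
    simpa using h4.add h5
  have h7 := (h6.const_mul (P x₀ ν))
  have h8 : 0 ≤ P x₀ ν * (Q τ τ / 2) := by
    refine ge_of_tendsto' h7 fun k => ?_
    have : P x₀ ν * (r k * P x₀ ν / t k) = P x₀ ν ^ 2 * (r k / t k) := by ring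
    rw [this]
    exact mul_nonneg (sq_nonneg _) (div_nonneg (hr0 k) (ht0 k).le)
  linarith

end Boundary

section MirandaTalenti

variable {n : ℕ}

local notation "𝐞(" i ")" => EuclideanSpace.single i (1 : ℝ)

/-- On the boundary of a convex domain, the flux through the boundary of the vector field
`Δu ∇u - D²u ∇u` is nonnegative if `u` vanishes on the boundary. -/
lemma boundary_flux_nonneg {Ω : Set (EuclideanSpace ℝ (Fin n))}
    {f : EuclideanSpace ℝ (Fin n) → ℝ} {f' : EuclideanSpace ℝ (Fin n) →L[ℝ] ℝ}
    {x₀ : EuclideanSpace ℝ (Fin n)} (hΩ : Ω = {x | f x < 0}) (hf : Continuous f)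
    (hconv : Convex ℝ Ω) (hx₀ : x₀ ∈ frontier Ω) (hf' : HasFDerivAt f f' x₀)
    {u : EuclideanSpace ℝ (Fin n) → ℝ} (hu : ∀ x ∈ frontier Ω, u x = 0)
    {P : EuclideanSpace ℝ (Fin n) → EuclideanSpace ℝ (Fin n) →L[ℝ] ℝ}
    {Q : EuclideanSpace ℝ (Fin n) →L[ℝ] EuclideanSpace ℝ (Fin n) →L[ℝ] ℝ}
    (hP : ∀ x ∈ closure Ω, HasFDerivWithinAt u (P x) (closure Ω) x)
    (hQ : HasFDerivWithinAt P Q (closure Ω) x₀) (hsymm : ∀ v w, Q v w = Q w v)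
    {ν : EuclideanSpace ℝ (Fin n)} (hν : 0 < f' ν) :
    0 ≤ ∑ i, ∑ j, P x₀ 𝐞(j) * (f' 𝐞(j) * Q 𝐞(i) 𝐞(i) - f' 𝐞(i) * Q 𝐞(j) 𝐞(i)) := by
  have htan := fun {τ} (hτ : f' τ = 0) =>
    tangential_derivatives_of_frontier hΩ hf hconv hx₀ hf' hu hP hQ hsymm hτ hν
  set c := P x₀ ν / f' ν with hc
  have hPc : ∀ v, P x₀ v = c * f' v := by
    intro v
    have h := (htan (τ := v - (f' v / f' ν) • ν) (by simp; field_simp; simp)).1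
    rw [map_sub, map_smul, sub_eq_zero, smul_eq_mul] at h
    rw [h, hc]
    ring
  have hsum : ∑ i, ∑ j, P x₀ 𝐞(j) * (f' 𝐞(j) * Q 𝐞(i) 𝐞(i) - f' 𝐞(i) * Q 𝐞(j) 𝐞(i))
      = (∑ i, ∑ j, c * Q (f' 𝐞(j) • 𝐞(i) - f' 𝐞(i) • 𝐞(j))
          (f' 𝐞(j) • 𝐞(i) - f' 𝐞(i) • 𝐞(j))) / 2 := by
    have hswap : ∑ i, ∑ j, c * (f' 𝐞(i) * f' 𝐞(i) * Q 𝐞(j) 𝐞(j))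
        = ∑ i, ∑ j, c * (f' 𝐞(j) * f' 𝐞(j) * Q 𝐞(i) 𝐞(i)) := Finset.sum_comm
    have hexp : ∀ i j, c * Q (f' 𝐞(j) • 𝐞(i) - f' 𝐞(i) • 𝐞(j)) (f' 𝐞(j) • 𝐞(i) - f' 𝐞(i) • 𝐞(j))
        = c * (f' 𝐞(j) * f' 𝐞(j) * Q 𝐞(i) 𝐞(i)) + c * (f' 𝐞(i) * f' 𝐞(i) * Q 𝐞(j) 𝐞(j))
          - 2 * (c * (f' 𝐞(i) * f' 𝐞(j) * Q 𝐞(j) 𝐞(i))) := by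
      intro i j
      simp only [map_sub, map_smul, sub_apply, smul_apply, smul_eq_mul, hsymm 𝐞(i) 𝐞(j)]
      ring
    have hlhs : ∀ i j, P x₀ 𝐞(j) * (f' 𝐞(j) * Q 𝐞(i) 𝐞(i) - f' 𝐞(i) * Q 𝐞(j) 𝐞(i))
        = c * (f' 𝐞(j) * f' 𝐞(j) * Q 𝐞(i) 𝐞(i)) - c * (f' 𝐞(i) * f' 𝐞(j) * Q 𝐞(j) 𝐞(i)) := by
      intro i j
      rw [hPc]
      ring
    simp only [hexp, hlhs, Finset.sum_add_distrib, Finset.sum_sub_distrib,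
      ← Finset.mul_sum] at hswap ⊢
    rw [hswap]
    ring
  rw [hsum]
  refine div_nonneg (Finset.sum_nonneg fun i _ => Finset.sum_nonneg fun j _ => ?_) zero_le_two
  have h := (htan (τ := f' 𝐞(j) • 𝐞(i) - f' 𝐞(i) • 𝐞(j))
    (by simp only [map_sub, map_smul, smul_eq_mul]; ring)).2
  rw [hc, div_mul_eq_mul_div]
  exact div_nonneg h hν.le

/-- The localised integral identity underlying Reilly's formula, perturbed by a radial field. -/
lemma integral_cutoff_hessian_minors {Ω : Set (EuclideanSpace ℝ (Fin n))} (hΩ : IsOpen Ω)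
    {P : EuclideanSpace ℝ (Fin n) → EuclideanSpace ℝ (Fin n) →L[ℝ] ℝ}
    {Q : EuclideanSpace ℝ (Fin n) → EuclideanSpace ℝ (Fin n) →L[ℝ] EuclideanSpace ℝ (Fin n) →L[ℝ] ℝ}
    (hPd : ContDiffOn ℝ 1 P Ω) (hQ : ∀ x ∈ Ω, HasFDerivAt P (Q x) x)
    {φ : EuclideanSpace ℝ (Fin n) → ℝ} (hφ : ContDiff ℝ 1 φ) (hφc : HasCompactSupport φ)
    (hφΩ : tsupport φ ⊆ Ω) (δ : ℝ) (z : EuclideanSpace ℝ (Fin n)) :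
    Integrable (fun x => φ x * (∑ i, ∑ j, (Q x 𝐞(i) 𝐞(i) * Q x 𝐞(j) 𝐞(j)
        - Q x 𝐞(j) 𝐞(i) * Q x 𝐞(i) 𝐞(j)) + δ * n)
      + (∑ i, ∑ j, P x 𝐞(j) * (fderiv ℝ φ x 𝐞(j) * Q x 𝐞(i) 𝐞(i)
        - fderiv ℝ φ x 𝐞(i) * Q x 𝐞(j) 𝐞(i)) + δ * fderiv ℝ φ x (x - z))) ∧
    ∫ x, (φ x * (∑ i, ∑ j, (Q x 𝐞(i) 𝐞(i) * Q x 𝐞(j) 𝐞(j)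
        - Q x 𝐞(j) 𝐞(i) * Q x 𝐞(i) 𝐞(j)) + δ * n)
      + (∑ i, ∑ j, P x 𝐞(j) * (fderiv ℝ φ x 𝐞(j) * Q x 𝐞(i) 𝐞(i)
        - fderiv ℝ φ x 𝐞(i) * Q x 𝐞(j) 𝐞(i)) + δ * fderiv ℝ φ x (x - z))) = 0 := by
  have hrad := integral_cutoff_radial hφ hφc z
  have hp : ∀ i : Fin n, ContDiffOn ℝ 1 (fun x => P x 𝐞(i)) Ω := fun i =>
    hPd.clm_apply contDiffOn_const
  have hmin := fun i j => integral_cutoff_mul_minor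
    (μ := (volume : Measure (EuclideanSpace ℝ (Fin n)))) hΩ (hp i) (hp j) hφ hφc hφΩ 𝐞(i) 𝐞(j)
  have hpd : ∀ x ∈ Ω, ∀ i v, fderiv ℝ (fun x => P x 𝐞(i)) x v = Q x v 𝐞(i) := by
    intro x hx i v
    rw [((hQ x hx).clm_apply (hasFDerivAt_const 𝐞(i) x)).fderiv]
    simp
  have heq : ∀ x, φ x * (∑ i, ∑ j, (Q x 𝐞(i) 𝐞(i) * Q x 𝐞(j) 𝐞(j)
        - Q x 𝐞(j) 𝐞(i) * Q x 𝐞(i) 𝐞(j)) + δ * n)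
      + (∑ i, ∑ j, P x 𝐞(j) * (fderiv ℝ φ x 𝐞(j) * Q x 𝐞(i) 𝐞(i)
        - fderiv ℝ φ x 𝐞(i) * Q x 𝐞(j) 𝐞(i)) + δ * fderiv ℝ φ x (x - z))
      = ∑ i, ∑ j, (φ x * (fderiv ℝ (fun x => P x 𝐞(i)) x 𝐞(i) * fderiv ℝ (fun x => P x 𝐞(j)) x 𝐞(j)
          - fderiv ℝ (fun x => P x 𝐞(i)) x 𝐞(j) * fderiv ℝ (fun x => P x 𝐞(j)) x 𝐞(i))
        + P x 𝐞(j) * (fderiv ℝ φ x 𝐞(j) * fderiv ℝ (fun x => P x 𝐞(i)) x 𝐞(i)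
          - fderiv ℝ φ x 𝐞(i) * fderiv ℝ (fun x => P x 𝐞(i)) x 𝐞(j)))
        + δ * (φ x * n + fderiv ℝ φ x (x - z)) := by
    intro x
    by_cases hx : x ∈ Ω
    · simp only [hpd x hx, Finset.sum_add_distrib, ← Finset.mul_sum]
      ring
    · have h1 : φ x = 0 := image_eq_zero_of_notMem_tsupport fun h => hx (hφΩ h)
      have h2 : fderiv ℝ φ x = 0 := by
        by_contra h
        exact hx (hφΩ (support_fderiv_subset ℝ h))
      simp [h1, h2]
  simp only [heq]
  have hint : ∀ i, Integrable (fun x => ∑ j, (φ x *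
        (fderiv ℝ (fun x => P x 𝐞(i)) x 𝐞(i) * fderiv ℝ (fun x => P x 𝐞(j)) x 𝐞(j)
          - fderiv ℝ (fun x => P x 𝐞(i)) x 𝐞(j) * fderiv ℝ (fun x => P x 𝐞(j)) x 𝐞(i))
        + P x 𝐞(j) * (fderiv ℝ φ x 𝐞(j) * fderiv ℝ (fun x => P x 𝐞(i)) x 𝐞(i)
          - fderiv ℝ φ x 𝐞(i) * fderiv ℝ (fun x => P x 𝐞(i)) x 𝐞(j)))) := fun i =>
    integrable_finsetSum _ fun j _ => (hmin i j).1
  refine ⟨(integrable_finsetSum _ fun i _ => hint i).add (hrad.1.const_mul δ), ?_⟩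
  rw [integral_add (integrable_finsetSum _ fun i _ => hint i) (hrad.1.const_mul δ),
    integral_const_mul, hrad.2, mul_zero, add_zero, integral_finsetSum _ fun i _ => hint i]
  refine Finset.sum_eq_zero fun i _ => ?_
  rw [integral_finsetSum _ fun j _ => (hmin i j).1]
  exact Finset.sum_eq_zero fun j _ => (hmin i j).2

/-- Smooth cutoff functions exhausting the bounded sublevel set `{f < 0}`. -/
noncomputable def sublevelCutoff (f : EuclideanSpace ℝ (Fin n) → ℝ) (k : ℕ)
    (x : EuclideanSpace ℝ (Fin n)) : ℝ :=
  Real.smoothTransition (-1 - k * f x)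

lemma fderiv_sublevelCutoff {f : EuclideanSpace ℝ (Fin n) → ℝ} (hf : ContDiff ℝ 1 f) (k : ℕ)
    (x : EuclideanSpace ℝ (Fin n)) :
    fderiv ℝ (sublevelCutoff f k) x
      = (-(k * deriv Real.smoothTransition (-1 - k * f x))) • fderiv ℝ f x := by
  have h1 : HasFDerivAt (fun x => -1 - k * f x) (-((k : ℝ) • fderiv ℝ f x)) x :=
    ((hf.differentiable one_ne_zero x).hasFDerivAt.const_mul (k : ℝ)).const_sub (-1)
  have h2 : HasDerivAt Real.smoothTransition (deriv Real.smoothTransition (-1 - k * f x))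
      (-1 - k * f x) :=
    ((Real.smoothTransition.contDiff (n := 1)).differentiable one_ne_zero _).hasDerivAt
  have h3 := h2.comp_hasFDerivAt x h1
  refine h3.fderiv.trans ?_
  ext v
  simp
  ring

lemma deriv_smoothTransition_eq_zero {t : ℝ} (ht : t < 0 ∨ 1 < t) :
    deriv Real.smoothTransition t = 0 := by
  rcases ht with ht | ht
  · rw [Filter.EventuallyEq.deriv_eq (f := fun _ => (0 : ℝ)), deriv_const]
    filter_upwards [gt_mem_nhds ht] with s hs using Real.smoothTransition.zero_of_nonpos hs.le
  · rw [Filter.EventuallyEq.deriv_eq (f := fun _ => (1 : ℝ)), deriv_const]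
    filter_upwards [lt_mem_nhds ht] with s hs using Real.smoothTransition.one_of_one_le hs.le

lemma contDiff_sublevelCutoff {f : EuclideanSpace ℝ (Fin n) → ℝ} (hf : ContDiff ℝ 1 f) (k : ℕ) :
    ContDiff ℝ 1 (sublevelCutoff f k) :=
  (Real.smoothTransition.contDiff (n := 1)).comp (contDiff_const.sub (contDiff_const.mul hf))

lemma tsupport_sublevelCutoff_subset {f : EuclideanSpace ℝ (Fin n) → ℝ} (hf : Continuous f)
    (k : ℕ) : tsupport (sublevelCutoff f k) ⊆ {x | f x < 0} := by
  have h : tsupport (sublevelCutoff f k) ⊆ {x | k * f x ≤ -1} := by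
    refine closure_minimal (fun x hx => ?_) (isClosed_le (by fun_prop) continuous_const)
    by_contra hcon
    simp only [mem_ofPred_eq, not_le] at hcon
    exact hx (Real.smoothTransition.zero_of_nonpos (by linarith))
  intro x hx
  have hx' : (k : ℝ) * f x ≤ -1 := h hx
  by_contra hcon
  simp only [mem_ofPred_eq, not_lt] at hcon
  have : 0 ≤ (k : ℝ) * f x := by positivity
  linarith

lemma tendsto_sublevelCutoff {f : EuclideanSpace ℝ (Fin n) → ℝ} {x : EuclideanSpace ℝ (Fin n)}
    (hx : f x < 0) : Tendsto (fun k => sublevelCutoff f k x) atTop (𝓝 1) := by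
  obtain ⟨N, hN⟩ := exists_nat_gt (2 / -f x)
  refine tendsto_const_nhds.congr' ?_
  filter_upwards [eventually_ge_atTop N] with k hk
  refine (Real.smoothTransition.one_of_one_le ?_).symm
  have hk' : (N : ℝ) ≤ k := by exact_mod_cast hk
  have h1 : 2 / -f x < k := hN.trans_le hk'
  rw [div_lt_iff₀ (by linarith)] at h1
  linarith

/-- The *Miranda–Talenti inequality* on bounded convex domains, up to an error term `δ`. -/
lemma integral_hessian_minors_add_nonneg {Ω : Set (EuclideanSpace ℝ (Fin n))}
    (hopen : IsOpen Ω) (hconv : Convex ℝ Ω) (hbd : Bornology.IsBounded Ω) (hne : Ω.Nonempty)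
    (hsm : HasSmoothBoundary Ω) {u : EuclideanSpace ℝ (Fin n) → ℝ}
    {P : EuclideanSpace ℝ (Fin n) → EuclideanSpace ℝ (Fin n) →L[ℝ] ℝ}
    {Q : EuclideanSpace ℝ (Fin n) → EuclideanSpace ℝ (Fin n) →L[ℝ] EuclideanSpace ℝ (Fin n) →L[ℝ] ℝ}
    (hu : ∀ x ∈ frontier Ω, u x = 0)
    (hP : ∀ x ∈ closure Ω, HasFDerivWithinAt u (P x) (closure Ω) x)
    (hQ : ∀ x ∈ closure Ω, HasFDerivWithinAt P (Q x) (closure Ω) x)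
    (hQc : ContinuousOn Q (closure Ω)) (hsymm : ∀ x ∈ closure Ω, ∀ v w, Q x v w = Q x w v)
    {δ : ℝ} (hδ : 0 < δ) :
    0 ≤ ∫ x in Ω, (∑ i, ∑ j, (Q x 𝐞(i) 𝐞(i) * Q x 𝐞(j) 𝐞(j)
        - Q x 𝐞(j) 𝐞(i) * Q x 𝐞(i) 𝐞(j)) + δ * n) := by
  obtain ⟨f, hf, hΩ, hreg⟩ := hsm
  obtain ⟨z, hz⟩ := hne
  have hf1 : ContDiff ℝ 1 f := hf.of_le (by exact_mod_cast le_top)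
  have hfd : ∀ x, HasFDerivAt f (fderiv ℝ f x) x := fun x =>
    (hf1.differentiable one_ne_zero x).hasFDerivAt
  have hfc : Continuous (fderiv ℝ f) := hf1.continuous_fderiv one_ne_zero
  have hK : IsCompact (closure Ω) := hbd.isCompact_closure
  have hPc : ContinuousOn P (closure Ω) := fun x hx => (hQ x hx).continuousWithinAt
  have hQΩ : ∀ x ∈ Ω, HasFDerivAt P (Q x) x := fun x hx =>
    (hQ x (subset_closure hx)).hasFDerivAt (mem_of_superset (hopen.mem_nhds hx) subset_closure)
  have hPd : ContDiffOn ℝ 1 P Ω := by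
    rw [show (1 : WithTop ℕ∞) = 0 + 1 by simp, contDiffOn_succ_iff_fderiv_of_isOpen hopen]
    exact ⟨fun x hx => (hQΩ x hx).differentiableAt.differentiableWithinAt, by simp,
      contDiffOn_zero.2 ((hQc.mono subset_closure).congr fun x hx => (hQΩ x hx).fderiv)⟩
  set G : EuclideanSpace ℝ (Fin n) → ℝ := fun x => ∑ i, ∑ j, (Q x 𝐞(i) 𝐞(i) * Q x 𝐞(j) 𝐞(j)
        - Q x 𝐞(j) 𝐞(i) * Q x 𝐞(i) 𝐞(j)) + δ * n with hG
  have hGc : ContinuousOn G (closure Ω) := by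
    fun_prop
  have hGint : IntegrableOn G Ω := (hGc.integrableOn_compact hK).mono_set subset_closure
  set Y : EuclideanSpace ℝ (Fin n) → ℝ := fun x => ∑ i, ∑ j, P x 𝐞(j) *
    (fderiv ℝ f x 𝐞(j) * Q x 𝐞(i) 𝐞(i) - fderiv ℝ f x 𝐞(i) * Q x 𝐞(j) 𝐞(i))
      + δ * fderiv ℝ f x (x - z) with hY
  have hYc : ContinuousOn Y (closure Ω) := by
    have := hfc.continuousOn (s := closure Ω)
    fun_prop
  have hYpos : ∀ x ∈ frontier Ω, 0 < Y x := by
    intro x hx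
    have hν : 0 < fderiv ℝ f x (x - z) := by
      have h := fderiv_sub_neg_of_mem hΩ hf1.continuous hconv hx (hfd x) (hreg x hx) hz
      rw [← neg_sub, map_neg] at h
      linarith
    have h1 := boundary_flux_nonneg hΩ hf1.continuous hconv hx (hfd x) hu hP
      (hQ x (frontier_subset_closure hx)) (hsymm x (frontier_subset_closure hx)) hν
    exact add_pos_of_nonneg_of_pos h1 (mul_pos hδ hν)
  obtain ⟨ε, hε, hYε⟩ : ∃ ε > 0, ∀ x ∈ Ω, -ε < f x → 0 ≤ Y x := by
    have hS : IsCompact (closure Ω ∩ Y ⁻¹' Iic 0) :=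
      hK.of_isClosed_subset (hYc.preimage_isClosed_of_isClosed isClosed_closure isClosed_Iic)
        inter_subset_left
    rcases (closure Ω ∩ Y ⁻¹' Iic 0).eq_empty_or_nonempty with h0 | h0
    · refine ⟨1, one_pos, fun x hx _ => ?_⟩
      by_contra! hlt
      exact (h0 ▸ (⟨subset_closure hx, hlt.le⟩ : x ∈ closure Ω ∩ Y ⁻¹' Iic 0) : x ∈ (∅ : Set _))
    · obtain ⟨s, ⟨hsK, hsY⟩, hs⟩ := hS.exists_isMaxOn h0 hf1.continuous.continuousOn
      have hsΩ : s ∈ Ω := by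
        by_contra h
        have := hYpos s (by rw [hopen.frontier_eq]; exact ⟨hsK, h⟩)
        exact absurd hsY (not_le.2 this)
      rw [hΩ] at hsΩ
      refine ⟨-f s, neg_pos.2 hsΩ, fun x hx hfx => ?_⟩
      by_contra! hlt
      have : f x ≤ f s := hs ⟨subset_closure hx, hlt.le⟩
      linarith
  have hcut : ∀ᶠ k : ℕ in atTop, 0 ≤ ∫ x in Ω, sublevelCutoff f k x * G x := by
    obtain ⟨N, hN⟩ := exists_nat_gt (1 / ε)
    filter_upwards [eventually_ge_atTop (2 * N)] with k hk
    have hk' : 2 < k * ε := by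
      have h1 : (2 * N : ℝ) ≤ k := by exact_mod_cast hk
      rw [div_lt_iff₀ hε] at hN
      nlinarith
    have hφ := contDiff_sublevelCutoff hf1 k
    have hφΩ : tsupport (sublevelCutoff f k) ⊆ Ω := by
      rw [hΩ]
      exact tsupport_sublevelCutoff_subset hf1.continuous k
    have hφc : HasCompactSupport (sublevelCutoff f k) :=
      hK.of_isClosed_subset (isClosed_tsupport _) (hφΩ.trans subset_closure)
    have hid := integral_cutoff_hessian_minors hopen hPd hQΩ hφ hφc hφΩ δ z
    have hφ0 : ∀ x ∉ Ω, sublevelCutoff f k x = 0 := fun x hx =>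
      image_eq_zero_of_notMem_tsupport fun h => hx (hφΩ h)
    rw [setIntegral_eq_integral_of_forall_compl_eq_zero fun x hx => by rw [hφ0 x hx, zero_mul],
      ← hid.2]
    refine integral_mono hid.1 ?_ fun x => ?_
    · simp only [mul_comm (sublevelCutoff f k _)]
      simpa only [mul_comm (G _)] using (continuous_mul_of_tsupport_subset hopen
        (hGc.mono subset_closure) hφ.continuous hφΩ).integrable_of_hasCompactSupport hφc.mul_right
    · simp only [hG]
      refine add_le_of_nonpos_right ?_
      have hW : ∑ i, ∑ j, P x 𝐞(j) * (fderiv ℝ (sublevelCutoff f k) x 𝐞(j) * Q x 𝐞(i) 𝐞(i)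
            - fderiv ℝ (sublevelCutoff f k) x 𝐞(i) * Q x 𝐞(j) 𝐞(i))
            + δ * fderiv ℝ (sublevelCutoff f k) x (x - z)
          = -(k * deriv Real.smoothTransition (-1 - k * f x)) * Y x := by
        rw [fderiv_sublevelCutoff hf1 k x]
        simp only [hY, mul_add, Finset.mul_sum, smul_apply, smul_eq_mul]
        congr 1
        · refine Finset.sum_congr rfl fun i _ => Finset.sum_congr rfl fun j _ => ?_
          ring
        · ring
      rw [hW]
      by_cases hx : -1 - k * f x < 0 ∨ 1 < -1 - k * f x
      · simp [deriv_smoothTransition_eq_zero hx]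
      · push Not at hx
        have hk0 : (0 : ℝ) < k := by
          by_contra! h
          nlinarith
        have hd : 0 ≤ deriv Real.smoothTransition (-1 - k * f x) :=
          Real.smoothTransition.monotone.deriv_nonneg
        have hxΩ : x ∈ Ω := by
          rw [hΩ, mem_ofPred_eq]
          by_contra! h
          nlinarith
        have hYx : 0 ≤ Y x := hYε x hxΩ (by by_contra! h; nlinarith)
        rw [neg_mul, neg_nonpos]
        positivity
  have hlim : Tendsto (fun k : ℕ => ∫ x in Ω, sublevelCutoff f k x * G x) atTop
      (𝓝 (∫ x in Ω, G x)) := by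
    refine tendsto_integral_of_dominated_convergence (fun x => ‖G x‖) (fun k => ?_) hGint.norm
      (fun k => Eventually.of_forall fun x => ?_) ?_
    · exact (contDiff_sublevelCutoff hf1 k).continuous.aestronglyMeasurable.mul
        hGint.aestronglyMeasurable
    · rw [norm_mul]
      refine mul_le_of_le_one_left (norm_nonneg _) ?_
      rw [sublevelCutoff, Real.norm_of_nonneg (Real.smoothTransition.nonneg _)]
      exact Real.smoothTransition.le_one _
    · refine (ae_restrict_mem hopen.measurableSet).mono fun x hx => ?_
      rw [hΩ] at hx
      simpa using (tendsto_sublevelCutoff hx).mul_const (G x)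
  exact ge_of_tendsto hlim hcut

/-- The *Miranda–Talenti inequality* on smooth bounded convex domains, for functions of class `C^2`
up to the boundary which vanish on the boundary. -/
theorem integral_hessSq_le_integral_lap_sq {Ω : Set (EuclideanSpace ℝ (Fin n))}
    (hopen : IsOpen Ω) (hconv : Convex ℝ Ω) (hbd : Bornology.IsBounded Ω) (hne : Ω.Nonempty)
    (hsm : HasSmoothBoundary Ω) {u : EuclideanSpace ℝ (Fin n) → ℝ}
    (hu : ContDiffOn ℝ 2 u (closure Ω)) (hbc : ∀ x ∈ frontier Ω, u x = 0) :
    ∫ x in Ω, hessSq u x ≤ ∫ x in Ω, lap u x ^ 2 := by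
  have hK : IsCompact (closure Ω) := hbd.isCompact_closure
  have hint : (interior (closure Ω)).Nonempty :=
    hne.mono (interior_maximal subset_closure hopen)
  have hud : UniqueDiffOn ℝ (closure Ω) := uniqueDiffOn_convex hconv.closure hint
  set P := fderivWithin ℝ u (closure Ω) with hPdef
  set Q := fderivWithin ℝ P (closure Ω) with hQdef
  have hPd : ContDiffOn ℝ 1 P (closure Ω) := hu.fderivWithin hud (by norm_num)
  have hP : ∀ x ∈ closure Ω, HasFDerivWithinAt u (P x) (closure Ω) x := fun x hx =>
    (hu.differentiableOn two_ne_zero x hx).hasFDerivWithinAt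
  have hQ : ∀ x ∈ closure Ω, HasFDerivWithinAt P (Q x) (closure Ω) x := fun x hx =>
    (hPd.differentiableOn one_ne_zero x hx).hasFDerivWithinAt
  have hQc : ContinuousOn Q (closure Ω) := hPd.continuousOn_fderivWithin hud le_rfl
  have hsymm : ∀ x ∈ closure Ω, ∀ v w, Q x v w = Q x w v := fun x hx =>
    (hu x hx).isSymmSndFDerivWithinAt (by simp) hud
      (closure_mono (interior_maximal subset_closure hopen) hx) hx
  have hnhds : ∀ x ∈ Ω, closure Ω ∈ 𝓝 x := fun x hx =>
    mem_of_superset (hopen.mem_nhds hx) subset_closure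
  have hsecond : ∀ x ∈ Ω, ∀ v w, fderiv ℝ (fun y => fderiv ℝ u y v) x w = Q x w v := by
    intro x hx v w
    have h1 : (fun y => fderiv ℝ u y v) =ᶠ[𝓝 x] fun y => P y v := by
      filter_upwards [hopen.mem_nhds hx] with y hy
      rw [hPdef, fderivWithin_of_mem_nhds (hnhds y hy)]
    rw [h1.fderiv_eq, (((hQ x (subset_closure hx)).hasFDerivAt (hnhds x hx)).clm_apply
      (hasFDerivAt_const v x)).fderiv]
    simp
  have hhess : ∀ x ∈ Ω, hessSq u x = ∑ i, ∑ j, Q x 𝐞(j) 𝐞(i) * Q x 𝐞(i) 𝐞(j) := by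
    intro x hx
    refine Finset.sum_congr rfl fun i _ => Finset.sum_congr rfl fun j _ => ?_
    rw [hsecond x hx, hsymm x (subset_closure hx) 𝐞(i) 𝐞(j), sq]
  have hlap : ∀ x ∈ Ω, lap u x ^ 2 = ∑ i, ∑ j, Q x 𝐞(i) 𝐞(i) * Q x 𝐞(j) 𝐞(j) := by
    intro x hx
    simp only [lap, hsecond x hx, sq, Finset.sum_mul_sum]
  rw [setIntegral_congr_fun hopen.measurableSet hhess,
    setIntegral_congr_fun hopen.measurableSet hlap, ← sub_nonneg]
  have hint : ∀ F : EuclideanSpace ℝ (Fin n) → ℝ, ContinuousOn F (closure Ω) → IntegrableOn F Ω :=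
    fun F hF => (hF.integrableOn_compact hK).mono_set subset_closure
  have h1 := hint (fun x => ∑ i, ∑ j, Q x 𝐞(i) 𝐞(i) * Q x 𝐞(j) 𝐞(j)) (by fun_prop)
  have h2 := hint (fun x => ∑ i, ∑ j, Q x 𝐞(j) 𝐞(i) * Q x 𝐞(i) 𝐞(j)) (by fun_prop)
  rw [← integral_sub h1 h2]
  have key : ∀ δ > 0, 0 ≤ (∫ x in Ω, (∑ i, ∑ j, Q x 𝐞(i) 𝐞(i) * Q x 𝐞(j) 𝐞(j)
      - ∑ i, ∑ j, Q x 𝐞(j) 𝐞(i) * Q x 𝐞(i) 𝐞(j))) + δ * n * volume.real Ω := by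
    intro δ hδ
    have h := integral_hessian_minors_add_nonneg hopen hconv hbd hne hsm hbc hP hQ hQc hsymm hδ
    simp only [Finset.sum_sub_distrib] at h
    have h3 : IntegrableOn (fun x => ∑ i, ∑ j, Q x 𝐞(i) 𝐞(i) * Q x 𝐞(j) 𝐞(j)
      - ∑ i, ∑ j, Q x 𝐞(j) 𝐞(i) * Q x 𝐞(i) 𝐞(j)) Ω := h1.sub h2
    rw [integral_add h3 (hint (fun _ => δ * n) continuousOn_const), setIntegral_const,
      smul_eq_mul, mul_comm (volume.real Ω)] at h
    exact h
  have hlim : Tendsto (fun δ : ℝ => (∫ x in Ω, (∑ i, ∑ j, Q x 𝐞(i) 𝐞(i) * Q x 𝐞(j) 𝐞(j)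
      - ∑ i, ∑ j, Q x 𝐞(j) 𝐞(i) * Q x 𝐞(i) 𝐞(j))) + δ * n * volume.real Ω) (𝓝[>] 0)
      (𝓝 ((∫ x in Ω, (∑ i, ∑ j, Q x 𝐞(i) 𝐞(i) * Q x 𝐞(j) 𝐞(j)
      - ∑ i, ∑ j, Q x 𝐞(j) 𝐞(i) * Q x 𝐞(i) 𝐞(j))) + 0 * n * volume.real Ω)) :=
    (Continuous.tendsto (by fun_prop) 0).mono_left nhdsWithin_le_nhds
  simpa using ge_of_tendsto hlim (eventually_nhdsWithin_of_forall key)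

end MirandaTalenti

end

/-- **Dirichlet case.** Let `Ω ⊂ ℝⁿ` be a bounded smooth convex domain
and `u` a Dirichlet eigenfunction: `Δu + λu = 0` in `Ω`, `u = 0` on `∂Ω`, normalized
with `∫_Ω u² = 1`. Then `∫_Ω |D²u|² ≤ λ²`. -/
theorem steklov_stmt_12 {n : ℕ} (hn : 2 ≤ n) (Ω : Set (EuclideanSpace ℝ (Fin n)))
    (hΩopen : IsOpen Ω) (hΩconv : Convex ℝ Ω) (hΩbd : Bornology.IsBounded Ω)
    (hΩne : Ω.Nonempty) (hΩsm : HasSmoothBoundary Ω)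
    (u : EuclideanSpace ℝ (Fin n) → ℝ) (lam : ℝ)
    (hu : ContDiffOn ℝ 2 u (closure Ω))
    (heig : ∀ x ∈ Ω, lap u x + lam * u x = 0)
    (hbc : ∀ x ∈ frontier Ω, u x = 0)
    (hnorm : (∫ x in Ω, (u x) ^ 2) = 1) :
    (∫ x in Ω, hessSq u x) ≤ lam ^ 2 := by
  have hlap : ∀ x ∈ Ω, lap u x ^ 2 = lam ^ 2 * u x ^ 2 := fun x hx => by
    rw [eq_neg_of_add_eq_zero_left (heig x hx)]
    ring
  calc ∫ x in Ω, hessSq u x ≤ ∫ x in Ω, lap u x ^ 2 :=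
        integral_hessSq_le_integral_lap_sq hΩopen hΩconv hΩbd hΩne hΩsm hu hbc
    _ = lam ^ 2 := by
        rw [setIntegral_congr_fun hΩopen.measurableSet hlap, integral_const_mul, hnorm, mul_one]
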